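/- arXiv:math/0602181 — 3 statements merged into one kernel-verified Lean document; each statement's English description precedes it below -/
import Mathlib

section
/- Assume λ ∈ ℂ \ ℤ, χ_p ≠ 0, and, in case p = 0, additionally χ_0 ∈ ℂ \ ℤ. Then F(λ/z, χ) is irreducible: the only ℂ-subspaces of F invariant under all the operators G⁺(i−1/2) and G⁻(i−1/2), i ∈ ℤ, are {0} and F. -/
noncomputable section

/-- The fermionic Fock space `F`: it has basis indexed by pairs `(A, B)` of finite sets of
nonnegative integers, the pair `(A, B)` corresponding to the basis monomial
`Ψ⁺(−n₁−1/2)⋯Ψ⁺(−n_r−1/2)·Ψ⁻(−k₁−1/2)⋯Ψ⁻(−k_s−1/2)·𝟙` where `A = {n₁ > ⋯ > n_r}` and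
`B = {k₁ > ⋯ > k_s}`. -/
abbrev FockF : Type := (Finset ℕ × Finset ℕ) →₀ ℂ

/-- The vacuum vector `𝟙`. -/
def vac : FockF := Finsupp.single (∅, ∅) 1

/-- `(−1)^{#{a ∈ S : a > m}}`. -/
def sgn (S : Finset ℕ) (m : ℕ) : ℂ := (-1 : ℂ) ^ (S.filter fun a => m < a).card

/-- `Ψ⁺(−m−1/2)`: exterior multiplication (creation). -/
def psiPneg (m : ℕ) : Module.End ℂ FockF :=
  Finsupp.lsum ℂ fun AB : Finset ℕ × Finset ℕ => LinearMap.toSpanSingleton ℂ FockF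
    (if m ∈ AB.1 then 0 else sgn AB.1 m • Finsupp.single (insert m AB.1, AB.2) 1)

/-- `Ψ⁺(m+1/2)`: the odd contraction operator pairing with `Ψ⁻(−m−1/2)` (annihilation). -/
def psiPpos (m : ℕ) : Module.End ℂ FockF :=
  Finsupp.lsum ℂ fun AB : Finset ℕ × Finset ℕ => LinearMap.toSpanSingleton ℂ FockF
    (if m ∈ AB.2 then ((-1 : ℂ) ^ AB.1.card * sgn AB.2 m) • Finsupp.single (AB.1, AB.2.erase m) 1
     else 0)

/-- `Ψ⁻(−m−1/2)`: exterior multiplication (creation). -/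
def psiMneg (m : ℕ) : Module.End ℂ FockF :=
  Finsupp.lsum ℂ fun AB : Finset ℕ × Finset ℕ => LinearMap.toSpanSingleton ℂ FockF
    (if m ∈ AB.2 then 0
     else ((-1 : ℂ) ^ AB.1.card * sgn AB.2 m) • Finsupp.single (AB.1, insert m AB.2) 1)

/-- `Ψ⁻(m+1/2)`: the odd contraction operator pairing with `Ψ⁺(−m−1/2)` (annihilation). -/
def psiMpos (m : ℕ) : Module.End ℂ FockF :=
  Finsupp.lsum ℂ fun AB : Finset ℕ × Finset ℕ => LinearMap.toSpanSingleton ℂ FockF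
    (if m ∈ AB.1 then sgn AB.1 m • Finsupp.single (AB.1.erase m, AB.2) 1 else 0)

/-- `PsiP i` is the operator `Ψ⁺(i − 1/2)`, `i ∈ ℤ`. -/
def PsiP (i : ℤ) : Module.End ℂ FockF :=
  if i ≤ 0 then psiPneg (-i).toNat else psiPpos (i - 1).toNat

/-- `PsiM i` is the operator `Ψ⁻(i − 1/2)`, `i ∈ ℤ`. -/
def PsiM (i : ℤ) : Module.End ℂ FockF :=
  if i ≤ 0 then psiMneg (-i).toNat else psiMpos (i - 1).toNat

/-- `G⁺(i−1/2) = (λ − i)·Ψ⁺(i−1/2)`. -/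
def Gplus (lam : ℂ) (i : ℤ) : Module.End ℂ FockF := (lam - (i : ℂ)) • PsiP i

/-- The finite set of indices `k ≥ −p` for which `Ψ⁻(k+i−1/2)` can act nontrivially on the
basis monomial `AB`; outside of it all terms of the locally finite sum defining `G⁻` vanish. -/
def GminusIdx (p : ℕ) (i : ℤ) (AB : Finset ℕ × Finset ℕ) : Finset ℤ :=
  (Finset.Icc (-(p : ℤ)) (-i) ∪ AB.1.image fun a : ℕ => (a : ℤ) + 1 - i).filter
    fun k => -(p : ℤ) ≤ k

/-- `G⁻(i−1/2) = −i·Ψ⁻(i−1/2) + Σ_{k=−p}^∞ χ_{−k}·Ψ⁻(k+i−1/2)` (a locally finite sum). -/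
def Gminus (p : ℕ) (χ : ℤ → ℂ) (i : ℤ) : Module.End ℂ FockF :=
  (-(i : ℂ)) • PsiM i +
    Finsupp.lsum ℂ fun AB : Finset ℕ × Finset ℕ => LinearMap.toSpanSingleton ℂ FockF
      (∑ k ∈ GminusIdx p i AB, χ (-k) • PsiM (k + i) (Finsupp.single AB 1))

end

/-!
`G⁺(i−1/2)` is a nonzero multiple of `Ψ⁺(i−1/2)`. For a fixed vector `v`, the vector
`G⁻(j+p−1/2) v` is `Ψ⁻(j−1/2) v` times a nonzero scalar (`χ_p` if `p > 0`, and `χ_0 − j` if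
`p = 0`), plus a finite combination of vectors `Ψ⁻(k−1/2) v` with `k > j`. Since `Ψ⁻(k−1/2) v = 0`
for large `k`, descending induction on `j` shows that an invariant subspace is invariant under all
`Ψ±`. The products `Ψ⁺(−m−1/2)Ψ⁻(m+1/2)` and `Ψ⁻(−m−1/2)Ψ⁺(m+1/2)` are the projections onto the
monomials containing a given factor; they separate the monomials, so a nonzero invariant subspace
contains a monomial, and adding and removing factors then reaches all of them.
-/

lemma forall_of_eventually_atTop_of_forall_gt {α : Type*} [LinearOrder α] [LocallyFiniteOrder α]
    {P : α → Prop} (hlarge : ∀ᶠ a in Filter.atTop, P a) (hstep : ∀ a, (∀ b > a, P b) → P a)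
    (a : α) : P a := by
  have : Nonempty α := ⟨a⟩
  obtain ⟨N, hN⟩ := Filter.eventually_atTop.1 hlarge
  by_contra ha
  have hfin : {b | a ≤ b ∧ ¬ P b}.Finite :=
    (Set.finite_Icc a N).subset fun b hb => ⟨hb.1, le_of_not_ge fun h => hb.2 (hN b h)⟩
  obtain ⟨b, hb⟩ := hfin.exists_maximal ⟨a, le_rfl, ha⟩
  refine hb.prop.2 (hstep b fun c hc => ?_)
  by_contra hPc
  exact hb.not_gt ⟨hb.prop.1.trans hc.le, hPc⟩ hc

lemma single_mem_iff_single_one_mem {ι K : Type*} [DivisionRing K] {U : Submodule K (ι →₀ K)}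
    {i : ι} {c : K} (hc : c ≠ 0) : Finsupp.single i c ∈ U ↔ Finsupp.single i 1 ∈ U := by
  rw [← Finsupp.smul_single_one, U.smul_mem_iff hc]

lemma single_apply_mem_of_filter_mem {ι M S : Type*} [AddCommGroup M] [SetLike S (ι →₀ M)]
    [AddSubgroupClass S (ι →₀ M)] {U : S} {i : ι}
    (hsep : ∀ j ≠ i, ∃ (p : ι → Prop) (_ : DecidablePred p),
      ¬ (p j ↔ p i) ∧ ∀ w ∈ U, w.filter p ∈ U)
    {v : ι →₀ M} (hv : v ∈ U) : Finsupp.single i (v i) ∈ U := by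
  induction hn : v.support.card using Nat.strong_induction_on generalizing v with
  | _ n ih =>
    by_cases hsupp : v.support ⊆ {i}
    · rwa [Finsupp.support_subset_singleton.1 hsupp] at hv
    obtain ⟨j, hj, hji⟩ := Finset.not_subset.1 hsupp
    obtain ⟨p, _, hpj, hpU⟩ := hsep j (by simpa using hji)
    have hmem : v.filter (fun k => p k ↔ p i) ∈ U := by
      by_cases hpi : p i
      · simpa only [hpi, iff_true] using hpU v hv
      · simpa only [hpi, iff_false, ← eq_sub_of_add_eq' (Finsupp.filter_add_filter_not v p)]
          using sub_mem hv (hpU v hv)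
    have hcard : (v.filter fun k => p k ↔ p i).support.card < n := by
      rw [← hn, Finsupp.support_filter]
      exact Finset.card_lt_card (Finset.filter_ssubset.2 ⟨j, hj, hpj⟩)
    simpa using ih _ hcard hmem rfl

lemma sgn_ne_zero (S : Finset ℕ) (m : ℕ) : sgn S m ≠ 0 :=
  pow_ne_zero _ (neg_ne_zero.2 one_ne_zero)

lemma sgn_mul_self (S : Finset ℕ) (m : ℕ) : sgn S m * sgn S m = 1 := by
  rw [sgn, ← mul_pow, neg_one_mul, neg_neg, one_pow]

lemma sgn_erase_self (S : Finset ℕ) (m : ℕ) : sgn (S.erase m) m = sgn S m := by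
  rw [sgn, sgn, Finset.filter_erase, Finset.erase_eq_of_notMem (by simp)]

section Monomials

variable (m : ℕ) (A B : Finset ℕ) (c : ℂ)

lemma psiPneg_single : psiPneg m (Finsupp.single (A, B) c) =
    if m ∈ A then 0 else Finsupp.single (insert m A, B) (c * sgn A m) := by
  simp only [psiPneg, Finsupp.lsum_single, LinearMap.toSpanSingleton_apply, smul_ite, smul_zero,
    Finsupp.smul_single, smul_eq_mul, mul_one]

lemma psiPpos_single : psiPpos m (Finsupp.single (A, B) c) =
    if m ∈ B then Finsupp.single (A, B.erase m) (c * ((-1) ^ A.card * sgn B m)) else 0 := by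
  simp only [psiPpos, Finsupp.lsum_single, LinearMap.toSpanSingleton_apply, smul_ite, smul_zero,
    Finsupp.smul_single, smul_eq_mul, mul_one]

lemma psiMneg_single : psiMneg m (Finsupp.single (A, B) c) =
    if m ∈ B then 0 else Finsupp.single (A, insert m B) (c * ((-1) ^ A.card * sgn B m)) := by
  simp only [psiMneg, Finsupp.lsum_single, LinearMap.toSpanSingleton_apply, smul_ite, smul_zero,
    Finsupp.smul_single, smul_eq_mul, mul_one]

lemma psiMpos_single : psiMpos m (Finsupp.single (A, B) c) =
    if m ∈ A then Finsupp.single (A.erase m, B) (c * sgn A m) else 0 := by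
  simp only [psiMpos, Finsupp.lsum_single, LinearMap.toSpanSingleton_apply, smul_ite, smul_zero,
    Finsupp.smul_single, smul_eq_mul, mul_one]

lemma psiPneg_psiMpos (v : FockF) : psiPneg m (psiMpos m v) = v.filter (fun X => m ∈ X.1) := by
  induction v using Finsupp.induction_linear with
  | zero => simp only [map_zero, Finsupp.filter_zero]
  | add f g hf hg => rw [map_add, map_add, hf, hg, Finsupp.filter_add]
  | single X c =>
    obtain ⟨A, B⟩ := X
    by_cases h : m ∈ A
    · rw [psiMpos_single, if_pos h, psiPneg_single, if_neg (Finset.notMem_erase m A),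
        Finset.insert_erase h, sgn_erase_self, mul_assoc, sgn_mul_self, mul_one,
        Finsupp.filter_single_of_pos (p := fun X : Finset ℕ × Finset ℕ => m ∈ X.1) h]
    · rw [psiMpos_single, if_neg h, map_zero,
        Finsupp.filter_single_of_neg (p := fun X : Finset ℕ × Finset ℕ => m ∈ X.1) h]

lemma psiMneg_psiPpos (v : FockF) : psiMneg m (psiPpos m v) = v.filter (fun X => m ∈ X.2) := by
  induction v using Finsupp.induction_linear with
  | zero => simp only [map_zero, Finsupp.filter_zero]
  | add f g hf hg => rw [map_add, map_add, hf, hg, Finsupp.filter_add]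
  | single X c =>
    obtain ⟨A, B⟩ := X
    by_cases h : m ∈ B
    · have hsign : ((-1) ^ A.card * sgn B m) * ((-1) ^ A.card * sgn B m) = 1 := by
        rw [mul_mul_mul_comm, sgn_mul_self, ← mul_pow, neg_one_mul, neg_neg, one_pow, one_mul]
      rw [psiPpos_single, if_pos h, psiMneg_single, if_neg (Finset.notMem_erase m B),
        Finset.insert_erase h, sgn_erase_self, mul_assoc, hsign, mul_one,
        Finsupp.filter_single_of_pos (p := fun X : Finset ℕ × Finset ℕ => m ∈ X.2) h]
    · rw [psiPpos_single, if_neg h, map_zero,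
        Finsupp.filter_single_of_neg (p := fun X : Finset ℕ × Finset ℕ => m ∈ X.2) h]

end Monomials

lemma PsiP_neg_natCast (m : ℕ) : PsiP (-m) = psiPneg m := by
  simp [PsiP]

lemma PsiP_natCast_add_one (m : ℕ) : PsiP (m + 1) = psiPpos m := by
  rw [PsiP, if_neg (by lia), add_sub_cancel_right, Int.toNat_natCast]

lemma PsiM_neg_natCast (m : ℕ) : PsiM (-m) = psiMneg m := by
  simp [PsiM]

lemma PsiM_natCast_add_one (m : ℕ) : PsiM (m + 1) = psiMpos m := by
  rw [PsiM, if_neg (by lia), add_sub_cancel_right, Int.toNat_natCast]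

section Irreducibility

variable {U : Submodule ℂ FockF}

lemma single_insert_left_mem_iff {m : ℕ} (hneg : ∀ v ∈ U, psiPneg m v ∈ U)
    (hpos : ∀ v ∈ U, psiMpos m v ∈ U) {A : Finset ℕ} (hm : m ∉ A) (B : Finset ℕ) :
    Finsupp.single (insert m A, B) 1 ∈ U ↔ Finsupp.single (A, B) 1 ∈ U := by
  refine ⟨fun h => ?_, fun h => ?_⟩
  · have := hpos _ h
    rwa [psiMpos_single, if_pos (Finset.mem_insert_self m A), Finset.erase_insert hm, one_mul,
      single_mem_iff_single_one_mem (sgn_ne_zero _ m)] at this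
  · have := hneg _ h
    rwa [psiPneg_single, if_neg hm, one_mul,
      single_mem_iff_single_one_mem (sgn_ne_zero A m)] at this

lemma single_insert_right_mem_iff {m : ℕ} (hneg : ∀ v ∈ U, psiMneg m v ∈ U)
    (hpos : ∀ v ∈ U, psiPpos m v ∈ U) (A : Finset ℕ) {B : Finset ℕ} (hm : m ∉ B) :
    Finsupp.single (A, insert m B) 1 ∈ U ↔ Finsupp.single (A, B) 1 ∈ U := by
  have hsign (S : Finset ℕ) : (-1) ^ A.card * sgn S m ≠ 0 :=
    mul_ne_zero (pow_ne_zero _ (neg_ne_zero.2 one_ne_zero)) (sgn_ne_zero S m)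
  refine ⟨fun h => ?_, fun h => ?_⟩
  · have := hpos _ h
    rwa [psiPpos_single, if_pos (Finset.mem_insert_self m B), Finset.erase_insert hm, one_mul,
      single_mem_iff_single_one_mem (hsign _)] at this
  · have := hneg _ h
    rwa [psiMneg_single, if_neg hm, one_mul, single_mem_iff_single_one_mem (hsign B)] at this

lemma single_mem_iff_vac_mem (hP : ∀ i, ∀ v ∈ U, PsiP i v ∈ U) (hM : ∀ i, ∀ v ∈ U, PsiM i v ∈ U)
    (A B : Finset ℕ) : Finsupp.single (A, B) 1 ∈ U ↔ vac ∈ U := by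
  have hright : Finsupp.single (∅, B) 1 ∈ U ↔ vac ∈ U := by
    induction B using Finset.induction_on with
    | empty => rfl
    | insert m B hm ih =>
      exact (single_insert_right_mem_iff (PsiM_neg_natCast m ▸ hM _)
        (PsiP_natCast_add_one m ▸ hP _) ∅ hm).trans ih
  have hleft : Finsupp.single (A, B) 1 ∈ U ↔ Finsupp.single (∅, B) 1 ∈ U := by
    induction A using Finset.induction_on with
    | empty => rfl
    | insert m A hm ih =>
      exact (single_insert_left_mem_iff (PsiP_neg_natCast m ▸ hP _)
        (PsiM_natCast_add_one m ▸ hM _) hm B).trans ih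
  exact hleft.trans hright

lemma single_apply_mem_of_psi_mem (hP : ∀ i, ∀ v ∈ U, PsiP i v ∈ U)
    (hM : ∀ i, ∀ v ∈ U, PsiM i v ∈ U) {v : FockF} (hv : v ∈ U) (X : Finset ℕ × Finset ℕ) :
    Finsupp.single X (v X) ∈ U := by
  refine single_apply_mem_of_filter_mem (fun Y hYX => ?_) hv
  have hdiff : (∃ m, ¬ (m ∈ Y.1 ↔ m ∈ X.1)) ∨ ∃ m, ¬ (m ∈ Y.2 ↔ m ∈ X.2) := by
    contrapose! hYX
    exact Prod.ext (Finset.ext hYX.1) (Finset.ext hYX.2)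
  rcases hdiff with ⟨m, hm⟩ | ⟨m, hm⟩
  · refine ⟨fun Z => m ∈ Z.1, inferInstance, hm, fun w hw => ?_⟩
    rw [← psiPneg_psiMpos, ← PsiP_neg_natCast, ← PsiM_natCast_add_one]
    exact hP _ _ (hM _ w hw)
  · refine ⟨fun Z => m ∈ Z.2, inferInstance, hm, fun w hw => ?_⟩
    rw [← psiMneg_psiPpos, ← PsiM_neg_natCast, ← PsiP_natCast_add_one]
    exact hM _ _ (hP _ w hw)

theorem eq_bot_or_eq_top_of_psi_mem (hP : ∀ i, ∀ v ∈ U, PsiP i v ∈ U)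
    (hM : ∀ i, ∀ v ∈ U, PsiM i v ∈ U) : U = ⊥ ∨ U = ⊤ := by
  refine or_iff_not_imp_left.2 fun hbot => ?_
  obtain ⟨v, hv, hv0⟩ := U.ne_bot_iff.1 hbot
  obtain ⟨X, hX⟩ := Finsupp.ne_iff.1 hv0
  have hvac : vac ∈ U := (single_mem_iff_vac_mem hP hM X.1 X.2).1 <|
    (single_mem_iff_single_one_mem hX).1 (single_apply_mem_of_psi_mem hP hM hv X)
  rw [eq_top_iff, ← Finsupp.span_single_eq_top, Submodule.span_le]
  rintro _ ⟨⟨A, B⟩, c, rfl⟩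
  rw [← Finsupp.smul_single_one]
  exact U.smul_mem c ((single_mem_iff_vac_mem hP hM A B).2 hvac)

end Irreducibility

lemma PsiM_single_eq_zero {j : ℤ} {X : Finset ℕ × Finset ℕ} (hj : 0 < j)
    (hX : ∀ a ∈ X.1, (a : ℤ) + 1 ≠ j) (c : ℂ) : PsiM j (Finsupp.single X c) = 0 := by
  rw [PsiM, if_neg hj.not_ge, psiMpos_single, if_neg fun h => hX _ h (by lia)]

lemma eventually_PsiM_eq_zero (v : FockF) : ∀ᶠ j in Filter.atTop, PsiM j v = 0 := by
  induction v using Finsupp.induction_linear with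
  | zero => simp
  | add f g hf hg =>
    filter_upwards [hf, hg] with j hfj hgj
    rw [map_add, hfj, hgj, add_zero]
  | single X c =>
    filter_upwards [Filter.eventually_gt_atTop ((X.1.sup id : ℕ) + 1 : ℤ)] with j hj
    refine PsiM_single_eq_zero (by lia) (fun a ha => ?_) c
    have : a ≤ X.1.sup id := Finset.le_sup (f := id) ha
    lia

lemma mem_GminusIdx {p : ℕ} {i k : ℤ} {X : Finset ℕ × Finset ℕ} :
    k ∈ GminusIdx p i X ↔ -(p : ℤ) ≤ k ∧ (k + i ≤ 0 ∨ ∃ a ∈ X.1, (a : ℤ) + 1 = k + i) := by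
  simp only [GminusIdx, Finset.mem_filter, Finset.mem_union, Finset.mem_Icc, Finset.mem_image]
  grind

lemma Gminus_single (p : ℕ) (χ : ℤ → ℂ) (i : ℤ) (X : Finset ℕ × Finset ℕ) (c : ℂ) :
    Gminus p χ i (Finsupp.single X c) = -(i : ℂ) • PsiM i (Finsupp.single X c) +
      ∑ k ∈ GminusIdx p i X, χ (-k) • PsiM (k + i) (Finsupp.single X c) := by
  have hc : Finsupp.single X c = c • Finsupp.single X 1 := (Finsupp.smul_single_one X c).symm
  rw [Gminus, LinearMap.add_apply, LinearMap.smul_apply, Finsupp.lsum_single,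
    LinearMap.toSpanSingleton_apply, Finset.smul_sum, hc]
  simp only [map_smul, smul_comm c]

lemma eventually_Gminus_eq_sum_Icc (p : ℕ) (χ : ℤ → ℂ) (i : ℤ) (v : FockF) :
    ∀ᶠ K in Filter.atTop, Gminus p χ i v = -(i : ℂ) • PsiM i v +
      ∑ k ∈ Finset.Icc (-(p : ℤ)) K, χ (-k) • PsiM (k + i) v := by
  induction v using Finsupp.induction_linear with
  | zero => simp
  | add f g hf hg =>
    filter_upwards [hf, hg] with K hfK hgK
    simp only [map_add, hfK, hgK, smul_add, Finset.sum_add_distrib]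
    abel
  | single X c =>
    filter_upwards [Filter.eventually_ge_atTop (-i),
      Filter.eventually_ge_atTop ((X.1.sup id : ℕ) + 1 - i : ℤ)] with K hKi hKX
    rw [Gminus_single]
    congr 1
    refine Finset.sum_subset (fun k hk => ?_) fun k hk hk' => ?_
    · obtain ⟨hpk, hki | ⟨a, ha, hak⟩⟩ := mem_GminusIdx.1 hk
      · exact Finset.mem_Icc.2 ⟨hpk, (le_neg_iff_add_nonpos_right.2 hki).trans hKi⟩
      · have : a ≤ X.1.sup id := Finset.le_sup (f := id) ha
        exact Finset.mem_Icc.2 ⟨hpk, by lia⟩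
    · rw [mem_GminusIdx, not_and, not_or, not_exists] at hk'
      obtain ⟨hki, hkX⟩ := hk' (Finset.mem_Icc.1 hk).1
      rw [PsiM_single_eq_zero (not_le.1 hki) (fun a ha hak => hkX a ⟨ha, hak⟩), smul_zero]

/-- The coefficient of `Ψ⁻(j−1/2)` in `G⁻(j+p−1/2)`, that is, of the lowest mode that occurs.
For `p = 0` the term `−j·Ψ⁻(j−1/2)` contributes to it as well. -/
noncomputable def gminusLeadingCoeff (p : ℕ) (χ : ℤ → ℂ) (j : ℤ) : ℂ :=
  if p = 0 then χ 0 - j else χ p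

lemma gminusLeadingCoeff_ne_zero {p : ℕ} {χ : ℤ → ℂ} (hp : χ p ≠ 0)
    (h0 : p = 0 → ∀ n : ℤ, χ 0 ≠ (n : ℂ)) (j : ℤ) : gminusLeadingCoeff p χ j ≠ 0 := by
  unfold gminusLeadingCoeff
  split_ifs with h
  · exact sub_ne_zero.2 (h0 h j)
  · exact hp

lemma Gminus_sub_leading_mem_span (p : ℕ) (χ : ℤ → ℂ) (j : ℤ) (v : FockF) :
    Gminus p χ (j + p) v - gminusLeadingCoeff p χ j • PsiM j v ∈
      Submodule.span ℂ ((fun k => PsiM k v) '' Set.Ioi j) := by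
  set W := Submodule.span ℂ ((fun k => PsiM k v) '' Set.Ioi j)
  have hW (k : ℤ) (hk : j < k) : PsiM k v ∈ W := Submodule.subset_span ⟨k, hk, rfl⟩
  obtain ⟨K, hG, hK⟩ := ((eventually_Gminus_eq_sum_Icc p χ (j + p) v).and
    (Filter.eventually_ge_atTop (-(p : ℤ)))).exists
  have htail : ∑ k ∈ (Finset.Icc (-(p : ℤ)) K).erase (-p), χ (-k) • PsiM (k + (j + p)) v ∈ W := by
    refine W.sum_mem fun k hk => W.smul_mem _ (hW _ ?_)
    rw [Finset.mem_erase, Finset.mem_Icc] at hk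
    lia
  rw [hG, ← Finset.add_sum_erase _ _ (Finset.left_mem_Icc.2 hK), neg_neg, ← add_assoc,
    add_sub_right_comm]
  refine W.add_mem ?_ htail
  rw [neg_add_cancel_comm_assoc, gminusLeadingCoeff]
  split_ifs with h
  · subst h
    convert W.zero_mem
    simp only [Nat.cast_zero, add_zero]
    module
  · rw [add_sub_cancel_right]
    exact W.smul_mem _ (hW _ (by lia))

lemma PsiM_mem_of_Gminus_mem {p : ℕ} {χ : ℤ → ℂ} (hp : χ p ≠ 0)
    (h0 : p = 0 → ∀ n : ℤ, χ 0 ≠ (n : ℂ)) {U : Submodule ℂ FockF} {v : FockF}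
    (hG : ∀ i, Gminus p χ i v ∈ U) (j : ℤ) : PsiM j v ∈ U := by
  refine forall_of_eventually_atTop_of_forall_gt (P := fun j => PsiM j v ∈ U)
    ((eventually_PsiM_eq_zero v).mono fun j hj => hj ▸ U.zero_mem) (fun j hgt => ?_) j
  have hspan : Submodule.span ℂ ((fun k => PsiM k v) '' Set.Ioi j) ≤ U :=
    Submodule.span_le.2 (Set.image_subset_iff.2 hgt)
  have hlead := (U.sub_mem_iff_right (hG _)).1 (hspan (Gminus_sub_leading_mem_span p χ j v))
  exact (U.smul_mem_iff (gminusLeadingCoeff_ne_zero hp h0 j)).1 hlead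

lemma PsiP_mem_of_Gplus_mem {lam : ℂ} {i : ℤ} (hlam : lam ≠ i) {U : Submodule ℂ FockF} {v : FockF}
    (hG : Gplus lam i v ∈ U) : PsiP i v ∈ U :=
  (U.smul_mem_iff (sub_ne_zero.2 hlam)).1 hG

/-- If `λ ∈ ℂ \ ℤ`, `χ_p ≠ 0` and (when `p = 0`) `χ_0 ∈ ℂ \ ℤ`, then the
module `F(λ/z, χ)` is irreducible: the only `ℂ`-subspaces of `F` invariant under all the
operators `G⁺(i−1/2)` and `G⁻(i−1/2)`, `i ∈ ℤ`, are `{0}` and `F`. -/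
theorem statement0 (p : ℕ) (χ : ℤ → ℂ) (hχtop : ∀ j : ℤ, (p : ℤ) < j → χ j = 0)
    (hp : χ p ≠ 0) (h0 : p = 0 → ∀ n : ℤ, χ 0 ≠ (n : ℂ))
    (lam : ℂ) (hlam : ∀ n : ℤ, lam ≠ (n : ℂ))
    (U : Submodule ℂ FockF)
    (hU : ∀ i : ℤ, ∀ v ∈ U, Gplus lam i v ∈ U ∧ Gminus p χ i v ∈ U) :
    U = ⊥ ∨ U = ⊤ := by
  have hP (i : ℤ) (v : FockF) (hv : v ∈ U) : PsiP i v ∈ U :=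
    PsiP_mem_of_Gplus_mem (hlam i) (hU i v hv).1
  have hM (i : ℤ) (v : FockF) (hv : v ∈ U) : PsiM i v ∈ U :=
    PsiM_mem_of_Gminus_mem hp h0 (fun k => (hU k v hv).2) i
  exact eq_bot_or_eq_top_of_psi_mem hP hM
end

section
/- The fermionic Fock space is irreducible over the Clifford algebra: the only ℂ-subspaces of Λ(V) invariant under all the operators a_i and a_i†, i ∈ I, are {0} and Λ(V). Equivalently, every nonzero vector of Λ(V) is cyclic for the associative algebra of endomorphisms generated by {a_i, a_i† : i ∈ I}. -/
/-!
Contraction is controlled by the functoriality of `Λ`: the endomorphism of `Λ(V)` induced by the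
transvection `y ↦ y + f(y) v` is `w ↦ w + v ∧ (f ⌋ w)`. A vector `w` annihilated by every
coordinate contraction is therefore fixed by `Λ(y ↦ y - bᵢ*(y) bᵢ)`, the map induced by the
projection killing `bᵢ`. Since `w` involves only finitely many basis vectors, composing finitely
many of these projections shows that `w` is fixed by `Λ(0)`, whose image consists of scalars.

Starting from any nonzero `w`, almost all contractions annihilate `w`, and since contractions
anticommute and square to zero, applying some of the others leads to a nonzero vector annihilated
by all of them, that is, to a nonzero scalar. Exterior multiplications then generate everything.
-/

namespace FockSpace

open CliffordAlgebra (contractLeft contractLeft_algebraMap contractLeft_comm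
  contractLeft_contractLeft contractLeft_ι_mul)
open ExteriorAlgebra (algebraMapInv ι ι_add_mul_swap ι_sq_zero map map_apply_ι map_comp_map map_id)
open LinearMap (transvection)
open Module (Basis Dual)

variable {I R M N : Type*} [CommRing R] [AddCommGroup M] [Module R M] [AddCommGroup N] [Module R N]

theorem map_transvection_apply (f : Dual R M) (v : M) (w : ExteriorAlgebra R M) :
    map (transvection f v) w = w + ι R v * contractLeft (Q := 0) f w := by
  induction w using CliffordAlgebra.left_induction with
  | algebraMap r => rw [AlgHom.commutes, contractLeft_algebraMap, mul_zero, add_zero]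
  | add x y hx hy => rw [map_add, hx, hy, map_add, mul_add, add_add_add_comm]
  | ι_mul w y hw =>
    have anticomm : ι R v * ι R y = -(ι R y * ι R v) :=
      eq_neg_of_add_eq_zero_left (ι_add_mul_swap v y)
    calc map (transvection f v) (ι R y * w)
        = (ι R y + f y • ι R v) * (w + ι R v * contractLeft (Q := 0) f w) := by
          rw [map_mul, hw, map_apply_ι, LinearMap.transvection.apply, map_add, map_smul]
      _ = ι R y * w + f y • (ι R v * w) + ι R y * ι R v * contractLeft (Q := 0) f w := by
          simp only [add_mul, mul_add, smul_mul_assoc, ← mul_assoc, ι_sq_zero, smul_zero, add_zero]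
      _ = ι R y * w + ι R v * contractLeft (Q := 0) f (ι R y * w) := by
          rw [contractLeft_ι_mul, mul_sub, mul_smul_comm, ← mul_assoc, anticomm, neg_mul,
            sub_neg_eq_add, add_assoc]

theorem contractLeft_eq_zero_of_map_transvection_eq_self {f : Dual R M} {v : M} (hfv : f v = 1)
    {w : ExteriorAlgebra R M} (hw : map (transvection f v) w = w) :
    contractLeft (Q := 0) f w = 0 := by
  have wedge_eq_zero : ι R v * contractLeft (Q := 0) f w = 0 := by
    rwa [map_transvection_apply, add_eq_left] at hw
  calc contractLeft (Q := 0) f w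
      = contractLeft (Q := 0) f (ι R v * contractLeft (Q := 0) f w) := by
        rw [contractLeft_ι_mul, contractLeft_contractLeft, mul_zero, sub_zero,
          hfv, one_smul]
    _ = 0 := by rw [wedge_eq_zero, map_zero]

theorem map_zero_apply (w : ExteriorAlgebra R M) :
    map (0 : M →ₗ[R] N) w = algebraMap R (ExteriorAlgebra R N) (algebraMapInv w) := by
  have map_zero_eq : map (0 : M →ₗ[R] N) = (Algebra.ofId R _).comp algebraMapInv := by
    ext m
    simp [algebraMapInv]
  exact DFunLike.congr_fun map_zero_eq w

theorem exists_finset_map_eq_map (b : Basis I R M) (w : ExteriorAlgebra R M) :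
    ∃ S : Finset I, ∀ φ ψ : M →ₗ[R] N, (∀ i ∈ S, φ (b i) = ψ (b i)) → map φ w = map ψ w := by
  classical
  induction w using CliffordAlgebra.left_induction with
  | algebraMap r => exact ⟨∅, fun φ ψ _ => by rw [AlgHom.commutes, AlgHom.commutes]⟩
  | add x y hx hy =>
    obtain ⟨S, hS⟩ := hx
    obtain ⟨T, hT⟩ := hy
    refine ⟨S ∪ T, fun φ ψ h => ?_⟩
    rw [map_add, map_add, hS φ ψ fun i hi => h i (Finset.mem_union_left T hi),
      hT φ ψ fun i hi => h i (Finset.mem_union_right S hi)]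
  | ι_mul w m hw =>
    obtain ⟨S, hS⟩ := hw
    refine ⟨S ∪ (b.repr m).support, fun φ ψ h => ?_⟩
    have agree_at_m : φ m = ψ m := by
      rw [← b.linearCombination_repr m, Finsupp.linearCombination_apply, Finsupp.sum, map_sum,
        map_sum]
      refine Finset.sum_congr rfl fun i hi => ?_
      rw [map_smul, map_smul, h i (Finset.mem_union_right S hi)]
    change map φ (ι R m * w) = map ψ (ι R m * w)
    rw [map_mul, map_mul, map_apply_ι, map_apply_ι, agree_at_m,
      hS φ ψ fun i hi => h i (Finset.mem_union_left _ hi)]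

theorem exists_finset_contractLeft_coord_eq_zero (b : Basis I R M) (w : ExteriorAlgebra R M) :
    ∃ S : Finset I, ∀ j ∉ S, contractLeft (Q := 0) (b.coord j) w = 0 := by
  classical
  obtain ⟨S, hS⟩ := exists_finset_map_eq_map (N := M) b w
  refine ⟨S, fun j hj => contractLeft_eq_zero_of_map_transvection_eq_self (v := b j) (by simp) ?_⟩
  calc map (transvection (b.coord j) (b j)) w
      = map LinearMap.id w := hS _ _ fun i hi => by
        simp [LinearMap.transvection.apply, ne_of_mem_of_not_mem hi hj]
    _ = w := by rw [map_id, AlgHom.id_apply]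

theorem exists_map_eq_self_of_contractLeft_coord_eq_zero (b : Basis I R M)
    {w : ExteriorAlgebra R M} (hw : ∀ i, contractLeft (Q := 0) (b.coord i) w = 0) (S : Finset I) :
    ∃ φ : M →ₗ[R] M, (∀ i ∈ S, φ (b i) = 0) ∧ map φ w = w := by
  classical
  induction S using Finset.induction_on with
  | empty => exact ⟨LinearMap.id, by simp, by rw [map_id, AlgHom.id_apply]⟩
  | insert i S _ ih =>
    obtain ⟨φ, φ_eq_zero, map_φ⟩ := ih
    refine ⟨φ ∘ₗ transvection (b.coord i) (-b i), fun j hj => ?_, ?_⟩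
    · rcases eq_or_ne j i with rfl | hji
      · simp [LinearMap.transvection.apply]
      · simp [LinearMap.transvection.apply, hji,
          φ_eq_zero j (Finset.mem_of_mem_insert_of_ne hj hji)]
    · rw [← map_comp_map, AlgHom.comp_apply, map_transvection_apply, hw, mul_zero, add_zero, map_φ]

theorem eq_algebraMap_of_contractLeft_coord_eq_zero (b : Basis I R M) {w : ExteriorAlgebra R M}
    (hw : ∀ i, contractLeft (Q := 0) (b.coord i) w = 0) :
    w = algebraMap R _ (algebraMapInv w) := by
  obtain ⟨S, hS⟩ := exists_finset_map_eq_map (N := M) b w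
  obtain ⟨φ, φ_eq_zero, map_φ⟩ := exists_map_eq_self_of_contractLeft_coord_eq_zero b hw S
  calc w = map φ w := map_φ.symm
    _ = map 0 w := hS φ 0 φ_eq_zero
    _ = algebraMap R _ (algebraMapInv w) := map_zero_apply w

theorem exists_ne_zero_forall_contractLeft_eq_zero {Q : QuadraticForm R M} {f : I → Dual R M}
    {U : Submodule R (CliffordAlgebra Q)} (hU : ∀ i, ∀ v ∈ U, contractLeft (f i) v ∈ U)
    (S : Finset I) {w : CliffordAlgebra Q} (hwU : w ∈ U) (hw : w ≠ 0)
    (hS : ∀ j ∉ S, contractLeft (f j) w = 0) :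
    ∃ v ∈ U, v ≠ 0 ∧ ∀ i, contractLeft (f i) v = 0 := by
  classical
  induction S using Finset.induction_on generalizing w with
  | empty => exact ⟨w, hwU, hw, fun i => hS i (Finset.notMem_empty i)⟩
  | insert i S _ ih =>
    by_cases hi : contractLeft (f i) w = 0
    · refine ih hwU hw fun j hj => ?_
      rcases eq_or_ne j i with rfl | hji
      · exact hi
      · exact hS j (by simp [hji, hj])
    · refine ih (hU i w hwU) hi fun j hj => ?_
      rcases eq_or_ne j i with rfl | hji
      · exact contractLeft_contractLeft _ _
      · rw [contractLeft_comm, hS j (by simp [hji, hj]), map_zero, neg_zero]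

theorem exists_ne_zero_algebraMap_mem (b : Basis I R M) {U : Submodule R (ExteriorAlgebra R M)}
    (hU : ∀ i, ∀ v ∈ U, contractLeft (Q := 0) (b.coord i) v ∈ U) (hU_ne : U ≠ ⊥) :
    ∃ r : R, r ≠ 0 ∧ algebraMap R _ r ∈ U := by
  obtain ⟨w, hwU, hw⟩ := U.ne_bot_iff.mp hU_ne
  obtain ⟨S, hS⟩ := exists_finset_contractLeft_coord_eq_zero b w
  obtain ⟨v, hvU, hv, v_vacuum⟩ := exists_ne_zero_forall_contractLeft_eq_zero hU S hwU hw hS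
  have v_eq := eq_algebraMap_of_contractLeft_coord_eq_zero b v_vacuum
  exact ⟨algebraMapInv v, fun h => hv (by rw [v_eq, h, map_zero]), v_eq ▸ hvU⟩

theorem ι_mul_mem_of_span_eq_top {s : Set M} (hs : Submodule.span R s = ⊤)
    {U : Submodule R (ExteriorAlgebra R M)} (hU : ∀ x ∈ s, ∀ v ∈ U, ι R x * v ∈ U) (m : M)
    {v : ExteriorAlgebra R M} (hv : v ∈ U) : ι R m * v ∈ U := by
  have span_le : Submodule.span R s ≤ U.comap (LinearMap.mulRight R v ∘ₗ ι R) :=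
    Submodule.span_le.mpr fun x hx => hU x hx v hv
  exact span_le (hs ▸ Submodule.mem_top)

theorem eq_top_of_one_mem {s : Set M} (hs : Submodule.span R s = ⊤)
    {U : Submodule R (ExteriorAlgebra R M)} (hU : ∀ x ∈ s, ∀ v ∈ U, ι R x * v ∈ U)
    (one_mem : 1 ∈ U) : U = ⊤ := by
  refine U.eq_top_iff'.mpr fun w => ?_
  induction w using CliffordAlgebra.left_induction with
  | algebraMap r =>
    rw [Algebra.algebraMap_eq_smul_one]
    exact U.smul_mem r one_mem
  | add x y hx hy => exact U.add_mem hx hy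
  | ι_mul w m hw => exact ι_mul_mem_of_span_eq_top hs hU m hw

theorem eq_top_of_ne_bot {K V : Type*} [Field K] [AddCommGroup V] [Module K V] (b : Basis I K V)
    {U : Submodule K (ExteriorAlgebra K V)}
    (hU : ∀ i, ∀ v ∈ U, ι K (b i) * v ∈ U ∧ contractLeft (Q := 0) (b.coord i) v ∈ U)
    (hU_ne : U ≠ ⊥) : U = ⊤ := by
  obtain ⟨r, hr, hrU⟩ := exists_ne_zero_algebraMap_mem b (fun i v hv => (hU i v hv).2) hU_ne
  have one_mem : 1 ∈ U := by
    rwa [Algebra.algebraMap_eq_smul_one, U.smul_mem_iff hr] at hrU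
  refine eq_top_of_one_mem b.span_eq ?_ one_mem
  rintro _ ⟨i, rfl⟩ v hv
  exact (hU i v hv).1

end FockSpace

theorem statement8_general {I K V : Type*} [Field K] [AddCommGroup V] [Module K V]
    (b : Module.Basis I K V) :
    (∀ U : Submodule K (ExteriorAlgebra K V),
      (∀ i : I, ∀ v ∈ U,
        ExteriorAlgebra.ι K (b i) * v ∈ U ∧
        CliffordAlgebra.contractLeft (Q := (0 : QuadraticForm K V)) (b.coord i) v ∈ U) →
      U = ⊥ ∨ U = ⊤) ∧
    (∀ w : ExteriorAlgebra K V, w ≠ 0 →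
      ∀ U : Submodule K (ExteriorAlgebra K V), w ∈ U →
        (∀ i : I, ∀ v ∈ U,
          ExteriorAlgebra.ι K (b i) * v ∈ U ∧
          CliffordAlgebra.contractLeft (Q := (0 : QuadraticForm K V)) (b.coord i) v ∈ U) →
        U = ⊤) :=
  ⟨fun _ hU => or_iff_not_imp_left.mpr (FockSpace.eq_top_of_ne_bot b hU),
    fun w hw U hwU hU => FockSpace.eq_top_of_ne_bot b hU (U.ne_bot_iff.mpr ⟨w, hwU, hw⟩)⟩

/-- Let `I` be an index set, `V = ⊕_{i∈I} ℂxᵢ` (realized as `I →₀ ℂ` with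
basis `xᵢ = single i 1`), and `Λ(V)` its exterior algebra.  For `i ∈ I` let
`aᵢ† = left exterior multiplication by xᵢ` and `aᵢ = contraction along the dual basis
functional δᵢ` (the odd contraction with `aᵢ(1) = 0`, `aᵢ(xⱼ) = δᵢⱼ`, satisfying the odd
Leibniz rule); these satisfy the canonical anticommutation relations.  Then the fermionic
Fock space `Λ(V)` is irreducible over the Clifford algebra: the only `ℂ`-subspaces of `Λ(V)`
invariant under all `aᵢ`, `aᵢ†` are `{0}` and `Λ(V)`; equivalently, every nonzero vector is
cyclic for the algebra of endomorphisms generated by the `aᵢ`, `aᵢ†`. -/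
theorem statement8 (I : Type) :
    (∀ U : Submodule ℂ (ExteriorAlgebra ℂ (I →₀ ℂ)),
      (∀ i : I, ∀ v ∈ U,
        ExteriorAlgebra.ι ℂ (Finsupp.single i (1 : ℂ)) * v ∈ U ∧
        CliffordAlgebra.contractLeft (Q := (0 : QuadraticForm ℂ (I →₀ ℂ)))
          (Finsupp.lapply i) v ∈ U) →
      U = ⊥ ∨ U = ⊤) ∧
    (∀ w : ExteriorAlgebra ℂ (I →₀ ℂ), w ≠ 0 →
      ∀ U : Submodule ℂ (ExteriorAlgebra ℂ (I →₀ ℂ)), w ∈ U →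
        (∀ i : I, ∀ v ∈ U,
          ExteriorAlgebra.ι ℂ (Finsupp.single i (1 : ℂ)) * v ∈ U ∧
          CliffordAlgebra.contractLeft (Q := (0 : QuadraticForm ℂ (I →₀ ℂ)))
            (Finsupp.lapply i) v ∈ U) →
        U = ⊤) := by
  exact statement8_general (Finsupp.basisSingleOne (R := ℂ) (ι := I))
end

section
/- The operators G±(r) on F(λ/z, χ) satisfy the defining relations of the Lie superalgebra 𝒜 with central elements acting as scalars: for all i, j ∈ ℤ, {G⁺(i−1/2), G⁺(j−1/2)} = 0, {G⁻(i−1/2), G⁻(j−1/2)} = 0, and {G⁺(i−1/2), G⁻(j−1/2)} = (λ−i)·(χ_{i+j−1} − j·δ_{i+j,1})·Id (where χ_j = 0 for j > p). In particular every anticommutator {G⁺(r), G⁻(s)} is a scalar multiple of the identity. -/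
/-!
Regarding the generators `Ψ⁺(−n−1/2)`, `Ψ⁻(−k−1/2)` as one ordered family indexed by `ℕ ⊕ ℕ`
makes `F` a single exterior algebra, on which every `Ψ±(r)` is a creation or an annihilation
operator. Their canonical anticommutation relations hold because inserting or removing one
generator flips the sign attached to exactly those generators that come after it.

The anticommutator with a fixed operator `a` commutes with locally finite sums, so
`{a, G⁻(j−1/2)}` is determined termwise by the brackets `{a, Ψ⁻(k+j−1/2)}`. For `a = Ψ⁻(i−1/2)`
they all vanish, hence also for `a = G⁻(i−1/2)`. For `a = Ψ⁺(i−1/2)` only `k = 1−i−j` contributes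
to the series, giving `χ_{i+j−1}`; when this index is below `−p` the term is absent from the sum,
in agreement with `χ_{i+j−1} = 0`.
-/

noncomputable section

section Anticommutator

/-- The anticommutator `{a, b} = ab + ba` of an `R`-algebra, bundled as a bilinear map. -/
def anticomm (R : Type*) {A : Type*} [CommSemiring R] [Semiring A] [Algebra R A] :
    A →ₗ[R] A →ₗ[R] A :=
  LinearMap.mul R A + (LinearMap.mul R A).flip

variable {R A B : Type*} [CommSemiring R] [Semiring A] [Algebra R A] [Semiring B] [Algebra R B]

lemma anticomm_apply (a b : A) : anticomm R a b = a * b + b * a := rfl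

lemma anticomm_comm (a b : A) : anticomm R a b = anticomm R b a := add_comm _ _

lemma map_anticomm {F : Type*} [FunLike F A B] [RingHomClass F A B] (φ : F) (a b : A) :
    φ (anticomm R a b) = anticomm R (φ a) (φ b) := by
  simp only [anticomm_apply, map_add, map_mul]

lemma anticomm_eq_of_single {α : Type*} {f g h : Module.End R (α →₀ R)}
    (hfg : ∀ x, f (g (Finsupp.single x 1)) + g (f (Finsupp.single x 1)) =
      h (Finsupp.single x 1)) :
    anticomm R f g = h :=
  Finsupp.lhom_ext' fun x => LinearMap.ext_ring (hfg x)

end Anticommutator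

section PointwiseSum

open Filter

variable {κ ι R V : Type*} [CommSemiring R] [AddCommMonoid V] [Module R V]

/-- The operator `T` is the locally finite sum of the family `f`: on every vector the finite
partial sums of `f` are eventually equal to `T`. This is unconditional summability in the strong
operator topology when `V` is discrete. -/
def HasLocallyFiniteSum (f : κ → Module.End R V) (T : Module.End R V) : Prop :=
  ∀ v, ∀ᶠ s : Finset κ in atTop, ∑ k ∈ s, f k v = T v

namespace HasLocallyFiniteSum

lemma of_basis {f : κ → Module.End R V} {T : Module.End R V} (b : Module.Basis ι R V)
    (h : ∀ i, ∀ᶠ s : Finset κ in atTop, ∑ k ∈ s, f k (b i) = T (b i)) :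
    HasLocallyFiniteSum f T := by
  intro v
  induction b.mem_span v using Submodule.span_induction with
  | mem _ hx => obtain ⟨i, rfl⟩ := hx; exact h i
  | zero => simp
  | add x y _ _ hx hy =>
    filter_upwards [hx, hy] with s hsx hsy
    simp only [map_add, Finset.sum_add_distrib, hsx, hsy]
  | smul c x _ hx =>
    filter_upwards [hx] with s hs
    simp only [map_smul, ← Finset.smul_sum, hs]

protected lemma anticomm {f : κ → Module.End R V} {T : Module.End R V}
    (h : HasLocallyFiniteSum f T) (a : Module.End R V) :
    HasLocallyFiniteSum (fun k => anticomm R a (f k)) (anticomm R a T) := by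
  intro v
  filter_upwards [h v, h (a v)] with s hv hav
  simp only [anticomm_apply, LinearMap.add_apply, Module.End.mul_apply, Finset.sum_add_distrib,
    ← map_sum, hv, hav]

lemma eq_of_forall_ne_eq_zero {f : κ → Module.End R V} {T : Module.End R V}
    (h : HasLocallyFiniteSum f T) (k₀ : κ) (hf : ∀ k, k ≠ k₀ → f k = 0) : T = f k₀ := by
  ext v
  obtain ⟨s, hs, hk₀⟩ := ((h v).and (eventually_ge_atTop {k₀})).exists
  rw [← hs, Finset.sum_eq_single_of_mem k₀ (Finset.singleton_subset_iff.mp hk₀)]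
  intro k _ hk
  rw [hf k hk, LinearMap.zero_apply]

lemma eq_zero {f : κ → Module.End R V} {T : Module.End R V}
    (h : HasLocallyFiniteSum f T) (hf : ∀ k, f k = 0) : T = 0 := by
  ext v
  obtain ⟨s, hs⟩ := (h v).exists
  simp only [← hs, hf, LinearMap.zero_apply, Finset.sum_const_zero]

end HasLocallyFiniteSum

end PointwiseSum

section CanonicalAnticommutationRelations

variable {ι : Type*} (r : ι → ι → Prop) [DecidableRel r] (R : Type*) [CommRing R]

/-- The sign `(-1) ^ #{a ∈ S | r a m}` produced by moving the generator `m` past the factors that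
precede it in the monomial `S`. -/
def prefixSign (S : Finset ι) (m : ι) : R := (-1) ^ (S.filter fun a => r a m).card

lemma prefixSign_mul_self (S : Finset ι) (m : ι) :
    prefixSign r R S m * prefixSign r R S m = 1 := by
  rw [prefixSign, ← mul_pow, neg_one_mul, neg_neg, one_pow]

variable {R} in
lemma ite_rel_neg_one_swap [Std.Asymm r] [Std.Trichotomous r] {m n : ι} (hmn : m ≠ n) :
    (if r n m then -1 else 1 : R) = -(if r m n then -1 else 1) := by
  by_cases h : r m n
  · rw [if_pos h, if_neg (Std.Asymm.asymm _ _ h), neg_neg]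
  · rw [if_neg h, if_pos (by_contra fun h' => hmn (Std.Trichotomous.trichotomous _ _ h h'))]

variable [DecidableEq ι]

/-- Exterior multiplication by the generator `m`. The exterior algebra on generators `ι` is
modelled on `Finset ι →₀ R`, the finite set `S` standing for the product of its elements in the
order `r`. -/
def creation (m : ι) : Module.End R (Finset ι →₀ R) :=
  Finsupp.lsum R fun S => LinearMap.toSpanSingleton R _
    (if m ∈ S then 0 else prefixSign r R S m • Finsupp.single (insert m S) 1)

/-- Contraction with the dual of the generator `m`, on the same model of the exterior algebra as
`creation`. -/
def annihilation (m : ι) : Module.End R (Finset ι →₀ R) :=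
  Finsupp.lsum R fun S => LinearMap.toSpanSingleton R _
    (if m ∈ S then prefixSign r R S m • Finsupp.single (S.erase m) 1 else 0)

lemma creation_single (m : ι) (S : Finset ι) :
    creation r R m (Finsupp.single S 1) =
      if m ∈ S then 0 else prefixSign r R S m • Finsupp.single (insert m S) 1 := by
  simp only [creation, Finsupp.lsum_single, LinearMap.toSpanSingleton_apply, one_smul]

lemma annihilation_single (m : ι) (S : Finset ι) :
    annihilation r R m (Finsupp.single S 1) =
      if m ∈ S then prefixSign r R S m • Finsupp.single (S.erase m) 1 else 0 := by
  simp only [annihilation, Finsupp.lsum_single, LinearMap.toSpanSingleton_apply, one_smul]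

variable {R}

lemma prefixSign_insert {S : Finset ι} {m : ι} (hm : m ∉ S) (n : ι) :
    prefixSign r R (insert m S) n = (if r m n then -1 else 1) * prefixSign r R S n := by
  unfold prefixSign
  rw [Finset.filter_insert]
  split_ifs
  · rw [Finset.card_insert_of_notMem fun h => hm (Finset.mem_of_mem_filter m h), pow_succ']
  · rw [one_mul]

lemma prefixSign_erase {S : Finset ι} {m : ι} (hm : m ∈ S) (n : ι) :
    prefixSign r R (S.erase m) n = (if r m n then -1 else 1) * prefixSign r R S n := by
  nth_rw 2 [← Finset.insert_erase hm]
  rw [prefixSign_insert r (Finset.notMem_erase m S), ← mul_assoc]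
  split_ifs <;> simp

variable (R)

lemma anticomm_creation_creation [Std.Asymm r] [Std.Trichotomous r] (m n : ι) :
    anticomm R (creation r R m) (creation r R n) = 0 := by
  refine anticomm_eq_of_single fun S => ?_
  by_cases h : m ∉ S ∧ n ∉ S ∧ m ≠ n
  · obtain ⟨hm, hn, hmn⟩ := h
    simp only [creation_single, hm, hn, if_false, map_smul, Finset.mem_insert, hmn, hmn.symm,
      or_self, prefixSign_insert r hm, prefixSign_insert r hn, smul_smul,
      Finset.insert_comm n m, ← add_smul, LinearMap.zero_apply]
    rw [ite_rel_neg_one_swap r hmn]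
    module
  · by_cases hm : m ∈ S <;> by_cases hn : n ∈ S <;>
      simp_all [creation_single, -Finsupp.smul_single]

lemma anticomm_annihilation_annihilation [Std.Asymm r] [Std.Trichotomous r] (m n : ι) :
    anticomm R (annihilation r R m) (annihilation r R n) = 0 := by
  refine anticomm_eq_of_single fun S => ?_
  by_cases h : m ∈ S ∧ n ∈ S ∧ m ≠ n
  · obtain ⟨hm, hn, hmn⟩ := h
    simp only [annihilation_single, hm, hn, if_true, map_smul, Finset.mem_erase, hmn, hmn.symm,
      ne_eq, not_false_eq_true, and_self, prefixSign_erase r hm, prefixSign_erase r hn,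
      smul_smul, Finset.erase_right_comm (a := n) (b := m), ← add_smul, LinearMap.zero_apply]
    rw [ite_rel_neg_one_swap r hmn]
    module
  · by_cases hm : m ∈ S <;> by_cases hn : n ∈ S <;>
      simp_all [annihilation_single, -Finsupp.smul_single]

lemma anticomm_creation_annihilation_self [Std.Irrefl r] (m : ι) :
    anticomm R (creation r R m) (annihilation r R m) = 1 := by
  refine anticomm_eq_of_single fun S => ?_
  have hmm : ¬ r m m := Std.Irrefl.irrefl m
  by_cases hm : m ∈ S <;>
    simp [creation_single, annihilation_single, hm, prefixSign_insert, prefixSign_erase, hmm,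
      smul_smul, prefixSign_mul_self, -Finsupp.smul_single]

lemma anticomm_creation_annihilation_of_ne [Std.Asymm r] [Std.Trichotomous r] {m n : ι}
    (hmn : m ≠ n) :
    anticomm R (creation r R m) (annihilation r R n) = 0 := by
  refine anticomm_eq_of_single fun S => ?_
  by_cases hm : m ∈ S <;> by_cases hn : n ∈ S
  · simp [creation_single, annihilation_single, hm, hn, hmn, -Finsupp.smul_single]
  · simp [creation_single, annihilation_single, hm, hn, -Finsupp.smul_single]
  · simp only [creation_single, annihilation_single, hm, hn, if_true, if_false, map_smul,
      Finset.mem_erase, Finset.mem_insert, and_false, or_true, prefixSign_insert r hm,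
      prefixSign_erase r hn, smul_smul, Finset.erase_insert_of_ne hmn, ← add_smul,
      LinearMap.zero_apply]
    rw [ite_rel_neg_one_swap r hmn]
    module
  · simp [creation_single, annihilation_single, hm, hn, hmn.symm, -Finsupp.smul_single]

lemma anticomm_creation_annihilation [Std.Asymm r] [Std.Trichotomous r] (m n : ι) :
    anticomm R (creation r R m) (annihilation r R n) = if m = n then 1 else 0 := by
  split_ifs with hmn
  · rw [hmn, anticomm_creation_annihilation_self]
  · exact anticomm_creation_annihilation_of_ne r R hmn

end CanonicalAnticommutationRelations

section DisjSum

variable {α β : Type*} [DecidableEq α] [DecidableEq β]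

lemma erase_inl_disjSum (A : Finset α) (B : Finset β) (a : α) :
    (A.disjSum B).erase (Sum.inl a) = (A.erase a).disjSum B := by
  ext (x | x) <;> simp

lemma erase_inr_disjSum (A : Finset α) (B : Finset β) (b : β) :
    (A.disjSum B).erase (Sum.inr b) = A.disjSum (B.erase b) := by
  ext (x | x) <;> simp

end DisjSum

section FockSpace

/-- The order of the generators in the basis monomials of `FockF`: `inl n` stands for
`Ψ⁺(−n−1/2)` and `inr k` for `Ψ⁻(−k−1/2)`; the `Ψ⁺` come first, and each kind is decreasing. -/
abbrev monomialOrder : ℕ ⊕ ℕ → ℕ ⊕ ℕ → Prop := Sum.Lex (· > ·) (· > ·)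

/-- The identification of `FockF` with the exterior algebra on `ℕ ⊕ ℕ`. -/
def fockEquiv : (Finset (ℕ ⊕ ℕ) →₀ ℂ) ≃ₗ[ℂ] FockF :=
  Finsupp.domLCongr Finset.sumEquiv.toEquiv

/-- The operators on `FockF`, identified with those on the exterior algebra on `ℕ ⊕ ℕ`. -/
def fockAlgEquiv : Module.End ℂ (Finset (ℕ ⊕ ℕ) →₀ ℂ) ≃ₐ[ℂ] Module.End ℂ FockF :=
  fockEquiv.conjAlgEquiv ℂ

lemma fockEquiv_single (S : Finset (ℕ ⊕ ℕ)) (c : ℂ) :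
    fockEquiv (Finsupp.single S c) = Finsupp.single (S.toLeft, S.toRight) c :=
  Finsupp.domLCongr_single _ _ _

lemma fockEquiv_symm_single (A B : Finset ℕ) (c : ℂ) :
    fockEquiv.symm (Finsupp.single (A, B) c) = Finsupp.single (A.disjSum B) c := by
  rw [LinearEquiv.symm_apply_eq, fockEquiv_single, Finset.toLeft_disjSum, Finset.toRight_disjSum]

lemma fockAlgEquiv_apply_single (f : Module.End ℂ (Finset (ℕ ⊕ ℕ) →₀ ℂ)) (A B : Finset ℕ) :
    fockAlgEquiv f (Finsupp.single (A, B) 1) =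
      fockEquiv (f (Finsupp.single (A.disjSum B) 1)) := by
  rw [← fockEquiv_symm_single]
  rfl

lemma prefixSign_disjSum_inl (A B : Finset ℕ) (m : ℕ) :
    prefixSign monomialOrder ℂ (A.disjSum B) (Sum.inl m) = sgn A m := by
  simp only [prefixSign, sgn, Finset.card_filter, Finset.sum_disjSum, Sum.lex_inl_inl,
    Sum.lex_inr_inl, gt_iff_lt, if_false, Finset.sum_const_zero, add_zero]

lemma prefixSign_disjSum_inr (A B : Finset ℕ) (m : ℕ) :
    prefixSign monomialOrder ℂ (A.disjSum B) (Sum.inr m) = (-1) ^ A.card * sgn B m := by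
  simp only [prefixSign, sgn, Finset.card_filter, Finset.sum_disjSum, Sum.Lex.sep,
    Sum.lex_inr_inr, gt_iff_lt, if_true, ← Finset.card_eq_sum_ones, pow_add]

lemma psiPneg_eq_fockAlgEquiv_creation (m : ℕ) :
    psiPneg m = fockAlgEquiv (creation monomialOrder ℂ (Sum.inl m)) := by
  refine Finsupp.lhom_ext' fun ⟨A, B⟩ => LinearMap.ext_ring ?_
  simp [psiPneg, fockAlgEquiv_apply_single, creation_single, prefixSign_disjSum_inl,
    apply_ite fockEquiv, fockEquiv_single, -Finsupp.smul_single]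

lemma psiPpos_eq_fockAlgEquiv_annihilation (m : ℕ) :
    psiPpos m = fockAlgEquiv (annihilation monomialOrder ℂ (Sum.inr m)) := by
  refine Finsupp.lhom_ext' fun ⟨A, B⟩ => LinearMap.ext_ring ?_
  simp [psiPpos, fockAlgEquiv_apply_single, annihilation_single, prefixSign_disjSum_inr,
    apply_ite fockEquiv, fockEquiv_single, erase_inr_disjSum, -Finsupp.smul_single]

lemma psiMneg_eq_fockAlgEquiv_creation (m : ℕ) :
    psiMneg m = fockAlgEquiv (creation monomialOrder ℂ (Sum.inr m)) := by
  refine Finsupp.lhom_ext' fun ⟨A, B⟩ => LinearMap.ext_ring ?_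
  simp [psiMneg, fockAlgEquiv_apply_single, creation_single, prefixSign_disjSum_inr,
    apply_ite fockEquiv, fockEquiv_single, -Finsupp.smul_single]

lemma psiMpos_eq_fockAlgEquiv_annihilation (m : ℕ) :
    psiMpos m = fockAlgEquiv (annihilation monomialOrder ℂ (Sum.inl m)) := by
  refine Finsupp.lhom_ext' fun ⟨A, B⟩ => LinearMap.ext_ring ?_
  simp [psiMpos, fockAlgEquiv_apply_single, annihilation_single, prefixSign_disjSum_inl,
    apply_ite fockEquiv, fockEquiv_single, erase_inl_disjSum, -Finsupp.smul_single]

lemma anticomm_PsiP_PsiP (i j : ℤ) : anticomm ℂ (PsiP i) (PsiP j) = 0 := by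
  unfold PsiP
  split_ifs <;>
    simp [psiPneg_eq_fockAlgEquiv_creation, psiPpos_eq_fockAlgEquiv_annihilation,
      ← map_anticomm, anticomm_creation_creation, anticomm_annihilation_annihilation,
      anticomm_creation_annihilation,
      anticomm_comm (annihilation _ _ _) (creation _ _ _)]

lemma anticomm_PsiM_PsiM (i j : ℤ) : anticomm ℂ (PsiM i) (PsiM j) = 0 := by
  unfold PsiM
  split_ifs <;>
    simp [psiMneg_eq_fockAlgEquiv_creation, psiMpos_eq_fockAlgEquiv_annihilation,
      ← map_anticomm, anticomm_creation_creation, anticomm_annihilation_annihilation,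
      anticomm_creation_annihilation,
      anticomm_comm (annihilation _ _ _) (creation _ _ _)]

lemma anticomm_PsiP_PsiM (i j : ℤ) :
    anticomm ℂ (PsiP i) (PsiM j) = if i + j = 1 then 1 else 0 := by
  unfold PsiP PsiM
  split_ifs <;>
    simp [psiPneg_eq_fockAlgEquiv_creation, psiPpos_eq_fockAlgEquiv_annihilation,
      psiMneg_eq_fockAlgEquiv_creation, psiMpos_eq_fockAlgEquiv_annihilation, ← map_anticomm,
      anticomm_creation_creation, anticomm_annihilation_annihilation,
      anticomm_creation_annihilation, anticomm_comm (annihilation _ _ _) (creation _ _ _)] <;>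
    omega

end FockSpace

section Gminus

/-- The locally finite sum `Σ_{k ≥ -p} χ_{-k}·Ψ⁻(k+i−1/2)` in the definition of `G⁻(i−1/2)`. -/
def chiPsiM (p : ℕ) (χ : ℤ → ℂ) (i : ℤ) : Module.End ℂ FockF :=
  Finsupp.lsum ℂ fun AB : Finset ℕ × Finset ℕ => LinearMap.toSpanSingleton ℂ FockF
    (∑ k ∈ GminusIdx p i AB, χ (-k) • PsiM (k + i) (Finsupp.single AB 1))

variable (p : ℕ) (χ : ℤ → ℂ)

lemma Gminus_eq_smul_add_chiPsiM (i : ℤ) : Gminus p χ i = (-(i : ℂ)) • PsiM i + chiPsiM p χ i := rfl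

variable {p} in
lemma PsiM_single_eq_zero_of_notMem_GminusIdx {i k : ℤ} {AB : Finset ℕ × Finset ℕ}
    (hpk : -(p : ℤ) ≤ k) (hk : k ∉ GminusIdx p i AB) :
    PsiM (k + i) (Finsupp.single AB 1) = 0 := by
  simp only [GminusIdx, Finset.mem_filter, Finset.mem_union, Finset.mem_Icc, Finset.mem_image,
    hpk, true_and, and_true, not_or, not_exists, not_and] at hk
  have hA : (k + i - 1).toNat ∉ AB.1 := fun h => hk.2 _ h (by omega)
  rw [PsiM, if_neg (by omega)]
  simp only [psiMpos, Finsupp.lsum_single, LinearMap.toSpanSingleton_apply, hA, if_false,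
    smul_zero]

lemma hasLocallyFiniteSum_chiPsiM (i : ℤ) :
    HasLocallyFiniteSum (fun k : ℤ => if -(p : ℤ) ≤ k then χ (-k) • PsiM (k + i) else 0)
      (chiPsiM p χ i) := by
  refine .of_basis Finsupp.basisSingleOne fun AB => ?_
  filter_upwards [Filter.eventually_ge_atTop (GminusIdx p i AB)] with s hs
  simp only [Finsupp.coe_basisSingleOne, chiPsiM, Finsupp.lsum_single,
    LinearMap.toSpanSingleton_apply, one_smul]
  symm
  refine Finset.sum_subset_zero_on_sdiff hs (fun k hk => ?_) fun k hk => ?_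
  · have hk' := (Finset.mem_sdiff.mp hk).2
    split_ifs with hpk
    · rw [LinearMap.smul_apply, PsiM_single_eq_zero_of_notMem_GminusIdx hpk hk', smul_zero]
    · rfl
  · rw [if_pos (Finset.mem_filter.mp hk).2, LinearMap.smul_apply]

variable {p χ}

lemma hasLocallyFiniteSum_anticomm_chiPsiM (a : Module.End ℂ FockF) (i : ℤ) :
    HasLocallyFiniteSum
      (fun k : ℤ => if -(p : ℤ) ≤ k then χ (-k) • anticomm ℂ a (PsiM (k + i)) else 0)
      (anticomm ℂ a (chiPsiM p χ i)) := by
  simpa only [apply_ite, map_smul, map_zero] using (hasLocallyFiniteSum_chiPsiM p χ i).anticomm a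

lemma anticomm_Gminus_eq_zero {a : Module.End ℂ FockF} (ha : ∀ k, anticomm ℂ a (PsiM k) = 0)
    (i : ℤ) : anticomm ℂ a (Gminus p χ i) = 0 := by
  have hsum : anticomm ℂ a (chiPsiM p χ i) = 0 :=
    (hasLocallyFiniteSum_anticomm_chiPsiM a i).eq_zero fun k => by simp [ha]
  rw [Gminus_eq_smul_add_chiPsiM, map_add, map_smul, ha, hsum, smul_zero, add_zero]

lemma anticomm_Gminus_Gminus (i j : ℤ) : anticomm ℂ (Gminus p χ i) (Gminus p χ j) = 0 := by
  refine anticomm_Gminus_eq_zero (fun k => ?_) j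
  rw [anticomm_comm]
  exact anticomm_Gminus_eq_zero (anticomm_PsiM_PsiM k) i

lemma anticomm_PsiP_chiPsiM (hχ : ∀ j : ℤ, (p : ℤ) < j → χ j = 0) (i j : ℤ) :
    anticomm ℂ (PsiP i) (chiPsiM p χ j) = χ (i + j - 1) • (1 : Module.End ℂ FockF) := by
  have hsum := hasLocallyFiniteSum_anticomm_chiPsiM (p := p) (χ := χ) (PsiP i) j
  have hne : ∀ k, k ≠ 1 - i - j →
      (if -(p : ℤ) ≤ k then χ (-k) • anticomm ℂ (PsiP i) (PsiM (k + j)) else 0) = 0 := by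
    intro k hk
    have hkj : i + (k + j) ≠ 1 := by omega
    rw [anticomm_PsiP_PsiM, if_neg hkj, smul_zero, ite_self]
  have hk₀ : i + (1 - i - j + j) = 1 := by ring
  rw [hsum.eq_of_forall_ne_eq_zero (1 - i - j) hne, anticomm_PsiP_PsiM, if_pos hk₀,
    show -(1 - i - j) = i + j - 1 by ring]
  split_ifs with hp
  · rfl
  · rw [hχ _ (by omega), zero_smul]

lemma anticomm_PsiP_Gminus (hχ : ∀ j : ℤ, (p : ℤ) < j → χ j = 0) (i j : ℤ) :
    anticomm ℂ (PsiP i) (Gminus p χ j) =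
      (χ (i + j - 1) - if i + j = 1 then (j : ℂ) else 0) • (1 : Module.End ℂ FockF) := by
  rw [Gminus_eq_smul_add_chiPsiM, map_add, map_smul, anticomm_PsiP_PsiM, anticomm_PsiP_chiPsiM hχ]
  split_ifs <;> module

end Gminus

lemma anticomm_Gplus (lam : ℂ) (i : ℤ) (a : Module.End ℂ FockF) :
    anticomm ℂ (Gplus lam i) a = (lam - (i : ℂ)) • anticomm ℂ (PsiP i) a := by
  rw [Gplus, map_smul, LinearMap.smul_apply]

end

/-- On `F(λ/z, χ)` the operators `G±` satisfy the defining relations of the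
Lie superalgebra `𝒜`, with the central elements acting as scalars: for all `i, j ∈ ℤ`,
`{G⁺(i−1/2), G⁺(j−1/2)} = 0`, `{G⁻(i−1/2), G⁻(j−1/2)} = 0`, and
`{G⁺(i−1/2), G⁻(j−1/2)} = (λ−i)·(χ_{i+j−1} − j·δ_{i+j,1})·Id`.  In particular every
anticommutator `{G⁺(r), G⁻(s)}` is a scalar multiple of the identity. -/
theorem statement9 (p : ℕ) (χ : ℤ → ℂ) (hχtop : ∀ j : ℤ, (p : ℤ) < j → χ j = 0)
    (lam : ℂ) (i j : ℤ) :
    Gplus lam i * Gplus lam j + Gplus lam j * Gplus lam i = 0 ∧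
    Gminus p χ i * Gminus p χ j + Gminus p χ j * Gminus p χ i = 0 ∧
    Gplus lam i * Gminus p χ j + Gminus p χ j * Gplus lam i =
      ((lam - (i : ℂ)) * (χ (i + j - 1) - if i + j = 1 then (j : ℂ) else 0)) •
        (1 : Module.End ℂ FockF) ∧
    ∃ c : ℂ, Gplus lam i * Gminus p χ j + Gminus p χ j * Gplus lam i =
      c • (1 : Module.End ℂ FockF) := by
  have hPP : anticomm ℂ (Gplus lam i) (Gplus lam j) = 0 := by
    rw [anticomm_Gplus, anticomm_comm, anticomm_Gplus, anticomm_PsiP_PsiP, smul_zero, smul_zero]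
  have hPM : anticomm ℂ (Gplus lam i) (Gminus p χ j) =
      ((lam - (i : ℂ)) * (χ (i + j - 1) - if i + j = 1 then (j : ℂ) else 0)) •
        (1 : Module.End ℂ FockF) := by
    rw [anticomm_Gplus, anticomm_PsiP_Gminus hχtop, smul_smul]
  exact ⟨hPP, anticomm_Gminus_Gminus i j, hPM, _, hPM⟩
end
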